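/- For the family 𝔤₁₈(β, b, z₃, z₄, θ₁, θ₂) with β ≠ 0 and b ≠ 0, the structure J is integrable, i.e. the Nijenhuis tensor N(E,F) = 0 for all E, F ∈ 𝔤, if and only if z₃ = 0 and z₄ = 0. -/

import Mathlib

noncomputable section

/-- The bilinear antisymmetric bracket on ℝ⁴ determined by the structure constants. -/
def bk (β b z₃ z₄ θ₁ θ₂ : ℝ) (E F : Fin 4 → ℝ) : Fin 4 → ℝ :=
  (E 0 * F 1 - E 1 * F 0) • (![0, 0, -θ₁, -θ₂] : Fin 4 → ℝ) +
  (E 0 * F 2 - E 2 * F 0) • (![0, -β, -(β * z₃ / b), β ^ 2 * z₃ / b ^ 2] : Fin 4 → ℝ) +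
  (E 0 * F 3 - E 3 * F 0) • (![0, -b, -z₃, β * z₃ / b] : Fin 4 → ℝ) +
  (E 1 * F 2 - E 2 * F 1) • (![β, 0, -(β * z₄ / b), β ^ 2 * z₄ / b ^ 2] : Fin 4 → ℝ) +
  (E 1 * F 3 - E 3 * F 1) • (![b, 0, -z₄, β * z₄ / b] : Fin 4 → ℝ) +
  (E 2 * F 3 - E 3 * F 2) • (![0, 0, 0, 0] : Fin 4 → ℝ)

/-- The almost Hermitian structure J with J(X)=Y, J(Y)=-X, J(Z)=W, J(W)=-Z. -/
def Jm (E : Fin 4 → ℝ) : Fin 4 → ℝ := ![-E 1, E 0, -E 3, E 2]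

/-- The Nijenhuis tensor of J. -/
def NT (β b z₃ z₄ θ₁ θ₂ : ℝ) (E F : Fin 4 → ℝ) : Fin 4 → ℝ :=
  bk β b z₃ z₄ θ₁ θ₂ E F + Jm (bk β b z₃ z₄ θ₁ θ₂ (Jm E) F) + Jm (bk β b z₃ z₄ θ₁ θ₂ E (Jm F)) -
    bk β b z₃ z₄ θ₁ θ₂ (Jm E) (Jm F)

theorem g18_integrable_iff (β b z₃ z₄ θ₁ θ₂ : ℝ) (hβ : β ≠ 0) (hb : b ≠ 0) :
    (∀ E F : Fin 4 → ℝ, NT β b z₃ z₄ θ₁ θ₂ E F = 0) ↔ (z₃ = 0 ∧ z₄ = 0) := by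
  constructor
  · intro h
    have h2 := congrFun (h ![1, 0, 0, 0] ![0, 0, 1, 0]) 2
    have h3 := congrFun (h ![1, 0, 0, 0] ![0, 0, 1, 0]) 3
    simp [NT, bk, Jm] at h2 h3
    obtain ⟨t, rfl⟩ : ∃ t, β = t * b := ⟨β / b, by field_simp⟩
    have e1 : ∀ z : ℝ, t * b * z / b = t * z := fun z => by field_simp
    have e2 : ∀ z : ℝ, (t * b) ^ 2 * z / b ^ 2 = t ^ 2 * z := fun z => by field_simp
    simp only [e1, e2] at h2 h3
    have hp : (1 + t ^ 2) ^ 2 ≠ 0 := by positivity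
    constructor
    · apply (mul_eq_zero.mp (?_ : (1 + t ^ 2) ^ 2 * z₃ = 0)).resolve_left hp
      linear_combination (-2 * t) * h2 - (1 - t ^ 2) * h3
    · apply (mul_eq_zero.mp (?_ : (1 + t ^ 2) ^ 2 * z₄ = 0)).resolve_left hp
      linear_combination (1 - t ^ 2) * h2 - 2 * t * h3
  · rintro ⟨rfl, rfl⟩ E F
    ext i
    fin_cases i <;> simp [NT, bk, Jm] <;> ring

end
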